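/- Gagliardo–Nirenberg type interpolation: there is a constant C such that for all f with f ∈ H^s(ℝ³) and ∇f ∈ H^s(ℝ³), ‖f‖_{W^{s,4}} ≤ C ‖f‖_{H^s}^{1/4} ‖∇f‖_{H^s}^{3/4}, where ‖f‖_{W^{s,4}} = ‖Λ^s f‖_{L^4}. -/

import Mathlib

open MeasureTheory FourierTransform
open scoped ENNReal

/-- Euclidean ℝ³. -/
abbrev E3 : Type := EuclideanSpace ℝ (Fin 3)

/-- The Bessel potential operator `Λˢ = (I − Δ)^{s/2}`, defined as the Fourier
multiplier with symbol `(1 + |ξ|²)^{s/2}`. -/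
noncomputable def Lam (s : ℝ) (f : E3 → ℂ) : E3 → ℂ :=
  𝓕⁻ fun ξ : E3 => (((1 + ‖ξ‖ ^ 2) ^ (s / 2) : ℝ) : ℂ) * 𝓕 f ξ

/-- The `Hˢ` Sobolev norm, defined on the Fourier side. -/
noncomputable def HsNorm (s : ℝ) (f : E3 → ℂ) : ℝ :=
  (∫ ξ : E3, (1 + ‖ξ‖ ^ 2) ^ s * ‖𝓕 f ξ‖ ^ 2) ^ (1 / 2 : ℝ)

/-- Partial derivative `∂_k` of a complex-valued function on ℝ³. -/
noncomputable def pdC (k : Fin 3) (f : E3 → ℂ) : E3 → ℂ :=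
  fun x => fderiv ℝ f x (EuclideanSpace.single k 1)

/-- Membership in `Hˢ` (together with integrability, so that the Fourier transform is
given by the Fourier integral). -/
def MemHs (s : ℝ) (f : E3 → ℂ) : Prop :=
  Integrable f volume ∧
    Integrable (fun ξ : E3 => (1 + ‖ξ‖ ^ 2) ^ s * ‖𝓕 f ξ‖ ^ 2) volume

/-! Young's convolution inequality and Plancherel's theorem, applied to `g ⋆ g`, give the
Hausdorff–Young inequality from `L^{4/3}` to `L⁴`, because `(𝓕 g)² = 𝓕 (g ⋆ g)`. It bounds
`‖Λˢ f‖_{L⁴}` by `‖g‖_{L^{4/3}}` for `g = (1 + ‖ξ‖²)^{s/2} 𝓕 f`. Hölder's inequality with the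
weight `(R + ‖ξ‖)⁻¹`, which lies in `L⁴` because the dimension is less than `4`, bounds
`‖g‖_{L^{4/3}}` by a multiple of `R^{d/4 - 1} (R ‖g‖_{L²} + ‖ ‖ξ‖ g ‖_{L²})`; optimizing over `R`
gives the interpolation inequality, since multiplication of `g` by `ξ` corresponds to
differentiation of `f`. -/

open Module
open scoped NNReal Convolution InnerProductSpace SchwartzMap

theorem lintegral_mul_mul_rpow_le {α : Type*} [MeasurableSpace α] {μ : Measure α}
    {f g h : α → ℝ≥0∞} (hf : AEMeasurable f μ) (hg : AEMeasurable g μ) (hh : AEMeasurable h μ)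
    {a b c : ℝ} (ha : 0 ≤ a) (hb : 0 ≤ b) (hc : 0 ≤ c) (habc : a + b + c = 1) :
    ∫⁻ x, f x ^ a * g x ^ b * h x ^ c ∂μ ≤
      (∫⁻ x, f x ∂μ) ^ a * (∫⁻ x, g x ∂μ) ^ b * (∫⁻ x, h x ∂μ) ^ c := by
  simpa [Fin.prod_univ_three] using ENNReal.lintegral_prod_norm_pow_le (μ := μ) Finset.univ
    (f := ![f, g, h]) (p := ![a, b, c]) (by simp [Fin.forall_fin_succ, hf, hg, hh])
    (by simpa [Fin.sum_univ_three] using habc) (by simp [Fin.forall_fin_succ, ha, hb, hc])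

section Young

theorem enorm_convolution_le {𝕜 E E' F G : Type*} [NontriviallyNormedField 𝕜]
    [NormedAddCommGroup E] [NormedSpace 𝕜 E] [NormedAddCommGroup E'] [NormedSpace 𝕜 E']
    [NormedAddCommGroup F] [NormedSpace 𝕜 F] [NormedSpace ℝ F] [AddCommGroup G] [MeasurableSpace G]
    {μ : Measure G} (L : E →L[𝕜] E' →L[𝕜] F) (f : G → E) (g : G → E') (x : G) :
    ‖(f ⋆[L, μ] g) x‖ₑ ≤ ‖L‖ₑ * ((fun y => ‖f y‖ₑ) ⋆ₗ[μ] (fun y => ‖g y‖ₑ)) x := by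
  calc ‖(f ⋆[L, μ] g) x‖ₑ ≤ ∫⁻ y, ‖L (f y) (g (x - y))‖ₑ ∂μ := enorm_integral_le_lintegral_enorm _
    _ ≤ ∫⁻ y, ‖L‖ₑ * (‖f y‖ₑ * ‖g (-y + x)‖ₑ) ∂μ := by
        gcongr with y
        rw [neg_add_eq_sub, ← mul_assoc]
        exact ((L (f y)).le_opENorm _).trans (by gcongr; exact L.le_opENorm _)
    _ = _ := lintegral_const_mul' _ _ enorm_ne_top

variable {G : Type*} [AddCommGroup G] [MeasurableSpace G] [MeasurableAdd₂ G] [MeasurableNeg G]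
  {μ : Measure G} [SFinite μ] [μ.IsAddLeftInvariant]

theorem lintegral_lconvolution {u v : G → ℝ≥0∞}
    (hu : AEMeasurable u μ) (hv : AEMeasurable v μ) :
    ∫⁻ x, (u ⋆ₗ[μ] v) x ∂μ = (∫⁻ x, u x ∂μ) * ∫⁻ x, v x ∂μ := by
  simp only [lconvolution_def]
  rw [lintegral_lintegral_swap (by fun_prop), ← lintegral_mul_const'' _ hu]
  refine lintegral_congr fun y => ?_
  rw [lintegral_const_mul'' _ (by fun_prop), lintegral_add_left_eq_self v (-y)]

variable [μ.IsNegInvariant]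

theorem lconvolution_le_mul_rpow {u v : G → ℝ≥0∞}
    (hu : AEMeasurable u μ) (hv : AEMeasurable v μ) {p q r : ℝ} (hp : 1 ≤ p) (hq : 1 ≤ q)
    (hr : 0 < r) (hpqr : p⁻¹ + q⁻¹ = 1 + r⁻¹) (x : G) :
    (u ⋆ₗ[μ] v) x ≤ ((fun y => u y ^ p) ⋆ₗ[μ] (fun y => v y ^ q)) x ^ r⁻¹ *
      (∫⁻ y, u y ^ p ∂μ) ^ (1 - q⁻¹) * (∫⁻ y, v y ^ q ∂μ) ^ (1 - p⁻¹) := by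
  have hp' : 0 ≤ 1 - p⁻¹ := sub_nonneg.2 (inv_le_one_of_one_le₀ hp)
  have hq' : 0 ≤ 1 - q⁻¹ := sub_nonneg.2 (inv_le_one_of_one_le₀ hq)
  have hr' : 0 ≤ r⁻¹ := inv_nonneg.2 hr.le
  have : AEMeasurable (fun y => v (-y + x)) μ := by
    simpa only [neg_add_eq_sub, Function.comp_def] using
      hv.comp_quasiMeasurePreserving (Measure.measurePreserving_sub_left μ x).quasiMeasurePreserving
  -- The exponents `r⁻¹`, `1 - q⁻¹`, `1 - p⁻¹` sum to `1`, so Hölder applies to these factors.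
  have factor (y : G) : u y * v (-y + x) = (u y ^ p * v (-y + x) ^ q) ^ r⁻¹ *
      (u y ^ p) ^ (1 - q⁻¹) * (v (-y + x) ^ q) ^ (1 - p⁻¹) := by
    have hup : p * r⁻¹ + p * (1 - q⁻¹) = 1 := by
      rw [← mul_add, show r⁻¹ + (1 - q⁻¹) = p⁻¹ by linarith, mul_inv_cancel₀ (by positivity)]
    have hvq : q * r⁻¹ + q * (1 - p⁻¹) = 1 := by
      rw [← mul_add, show r⁻¹ + (1 - p⁻¹) = q⁻¹ by linarith, mul_inv_cancel₀ (by positivity)]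
    rw [ENNReal.mul_rpow_of_nonneg _ _ hr']
    simp only [← ENNReal.rpow_mul]
    rw [mul_right_comm (u y ^ _), mul_assoc (_ * _),
      ← ENNReal.rpow_add_of_nonneg _ _ (by positivity) (by positivity),
      ← ENNReal.rpow_add_of_nonneg _ _ (by positivity) (by positivity), hup, hvq,
      ENNReal.rpow_one, ENNReal.rpow_one]
  calc (u ⋆ₗ[μ] v) x
      = ∫⁻ y, (u y ^ p * v (-y + x) ^ q) ^ r⁻¹ *
          (u y ^ p) ^ (1 - q⁻¹) * (v (-y + x) ^ q) ^ (1 - p⁻¹) ∂μ := lintegral_congr factor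
    _ ≤ _ := lintegral_mul_mul_rpow_le (by fun_prop) (by fun_prop) (by fun_prop) hr' hq' hp'
          (by linarith)
    _ = _ := by
      simp only [neg_add_eq_sub, lconvolution_def, lintegral_sub_left_eq_self (fun y => v y ^ q) x]

theorem lintegral_lconvolution_rpow_le {u v : G → ℝ≥0∞}
    (hu : AEMeasurable u μ) (hv : AEMeasurable v μ) {p q r : ℝ} (hp : 1 ≤ p) (hq : 1 ≤ q)
    (hr : 0 < r) (hpqr : p⁻¹ + q⁻¹ = 1 + r⁻¹) :
    (∫⁻ x, (u ⋆ₗ[μ] v) x ^ r ∂μ) ^ r⁻¹ ≤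
      (∫⁻ x, u x ^ p ∂μ) ^ p⁻¹ * (∫⁻ x, v x ^ q ∂μ) ^ q⁻¹ := by
  have hp' : 0 ≤ 1 - p⁻¹ := sub_nonneg.2 (inv_le_one_of_one_le₀ hp)
  have hq' : 0 ≤ 1 - q⁻¹ := sub_nonneg.2 (inv_le_one_of_one_le₀ hq)
  have hr' : 0 ≤ r⁻¹ := inv_nonneg.2 hr.le
  set U := ∫⁻ x, u x ^ p ∂μ
  set V := ∫⁻ x, v x ^ q ∂μ
  have pointwise (x : G) : (u ⋆ₗ[μ] v) x ^ r ≤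
      ((fun y => u y ^ p) ⋆ₗ[μ] (fun y => v y ^ q)) x * (U ^ (1 - q⁻¹) * V ^ (1 - p⁻¹)) ^ r := by
    refine (ENNReal.rpow_le_rpow (lconvolution_le_mul_rpow hu hv hp hq hr hpqr x) hr.le).trans_eq ?_
    rw [mul_assoc, ENNReal.mul_rpow_of_nonneg _ _ hr.le, ENNReal.rpow_inv_rpow hr.ne']
  calc (∫⁻ x, (u ⋆ₗ[μ] v) x ^ r ∂μ) ^ r⁻¹
      ≤ (U * V * (U ^ (1 - q⁻¹) * V ^ (1 - p⁻¹)) ^ r) ^ r⁻¹ := by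
        rw [← lintegral_lconvolution (hu.pow_const p) (hv.pow_const q),
          ← lintegral_mul_const'' _ (aemeasurable_lconvolution (hu.pow_const p) (hv.pow_const q))]
        gcongr with x
        exact pointwise x
    _ = U ^ (r⁻¹ + (1 - q⁻¹)) * V ^ (r⁻¹ + (1 - p⁻¹)) := by
        rw [ENNReal.mul_rpow_of_nonneg _ _ hr', ENNReal.rpow_rpow_inv hr.ne',
          ENNReal.mul_rpow_of_nonneg _ _ hr', mul_mul_mul_comm,
          ENNReal.rpow_add_of_nonneg _ _ hr' hq', ENNReal.rpow_add_of_nonneg _ _ hr' hp']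
    _ = U ^ p⁻¹ * V ^ q⁻¹ := by
        rw [show r⁻¹ + (1 - q⁻¹) = p⁻¹ by linarith, show r⁻¹ + (1 - p⁻¹) = q⁻¹ by linarith]

theorem eLpNorm_convolution_le {𝕜 E E' F : Type*} [NontriviallyNormedField 𝕜]
    [NormedAddCommGroup E] [NormedSpace 𝕜 E] [NormedAddCommGroup E'] [NormedSpace 𝕜 E']
    [NormedAddCommGroup F] [NormedSpace 𝕜 F] [NormedSpace ℝ F] (L : E →L[𝕜] E' →L[𝕜] F)
    {f : G → E} {g : G → E'} (hf : AEStronglyMeasurable f μ) (hg : AEStronglyMeasurable g μ)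
    {p q r : ℝ≥0} (hp : 1 ≤ p) (hq : 1 ≤ q) (hr : 0 < r) (hpqr : p⁻¹ + q⁻¹ = 1 + r⁻¹) :
    eLpNorm (f ⋆[L, μ] g) r μ ≤ ‖L‖ₑ * (eLpNorm f p μ * eLpNorm g q μ) := by
  have young := lintegral_lconvolution_rpow_le hf.enorm hg.enorm (p := p) (q := q) (r := r)
    (mod_cast hp) (mod_cast hq) (mod_cast hr) (mod_cast hpqr)
  simp only [← one_div] at young
  calc eLpNorm (f ⋆[L, μ] g) r μ
      ≤ ‖L‖ₑ * eLpNorm ((fun y => ‖f y‖ₑ) ⋆ₗ[μ] (fun y => ‖g y‖ₑ)) r μ :=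
        eLpNorm_le_mul_eLpNorm_of_ae_le_mul' (.of_forall fun x => enorm_convolution_le L f g x) r
    _ ≤ ‖L‖ₑ * (eLpNorm f p μ * eLpNorm g q μ) := by
        rw [eLpNorm_nnreal_eq_lintegral hr.ne', eLpNorm_nnreal_eq_lintegral (by positivity),
          eLpNorm_nnreal_eq_lintegral (by positivity)]
        simp only [enorm_eq_self]
        gcongr

theorem eLpNorm_convolution_self_le {𝕜 : Type*} [RCLike 𝕜] {f : G → 𝕜}
    (hf : AEStronglyMeasurable f μ) :
    eLpNorm (f ⋆[ContinuousLinearMap.mul 𝕜 𝕜, μ] f) 2 μ ≤ eLpNorm f (4 / 3) μ ^ 2 := by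
  have young := eLpNorm_convolution_le (ContinuousLinearMap.mul 𝕜 𝕜) hf hf (p := 4 / 3)
    (q := 4 / 3) (r := 2) (by norm_num [one_le_div]) (by norm_num [one_le_div]) two_pos
    (by norm_num)
  have enorm_mul_eq_one : ‖ContinuousLinearMap.mul 𝕜 𝕜‖ₑ = 1 := by
    rw [← ofReal_norm, ContinuousLinearMap.opNorm_mul, ENNReal.ofReal_one]
  have coe_exponent : ((4 / 3 : ℝ≥0) : ℝ≥0∞) = 4 / 3 := by
    norm_num [ENNReal.coe_div]
  rwa [enorm_mul_eq_one, one_mul, coe_exponent, ← sq] at young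

end Young

section Fourier

variable {V F : Type*} [NormedAddCommGroup V] [InnerProductSpace ℝ V] [FiniteDimensional ℝ V]
  [MeasurableSpace V] [BorelSpace V] [NormedAddCommGroup F]

theorem continuous_fourier [NormedSpace ℂ F] {f : V → F} (hf : Integrable f) :
    Continuous (𝓕 f) :=
  VectorFourier.fourierIntegral_continuous Real.continuous_fourierChar
    (innerSL ℝ).continuous₂ hf

theorem fourierInv_eq_zero_of_not_integrable [NormedSpace ℂ F] {f : V → F}
    (hf : ¬Integrable f) : 𝓕⁻ f = 0 := by
  ext x
  rw [Real.fourierInv_eq_fourier_neg, Real.fourier_eq]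
  exact integral_undef (mt (Real.fourierIntegral_convergent_iff (-x)).1 hf)

theorem fourier_fderiv_apply [NormedSpace ℂ F] {f : V → F} (hf : Differentiable ℝ f)
    (hfi : Integrable f) {v : V} (hf' : Integrable fun x => fderiv ℝ f x v) (ξ : V) :
    𝓕 (fun x => fderiv ℝ f x v) ξ = (2 * Real.pi * ⟪v, ξ⟫_ℝ * Complex.I) • 𝓕 f ξ := by
  set e : V → ℂ := fun x => Real.fourierChar (-⟪x, ξ⟫_ℝ) with e_def
  have fderiv_e (x : V) : fderiv ℝ e x v = (-(2 * Real.pi * ⟪v, ξ⟫_ℝ * Complex.I) : ℂ) * e x :=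
    (Real.fderiv_fourierChar_neg_bilinear_left_apply (innerSL ℝ) x v ξ).trans <| by
      rw [innerSL_apply_apply, e_def]
      ring_nf
      rfl
  have e_integrable {g : V → F} (hg : Integrable g) : Integrable fun x => e x • g x :=
    (Real.fourierIntegral_convergent_iff ξ).2 hg
  have parts := integral_smul_fderiv_eq_neg_fderiv_smul_of_integrable
    (f := e) (g := f) (v := v) (μ := volume)
    (by simpa only [fderiv_e, mul_smul, Pi.smul_def] using
      (e_integrable hfi).smul (-(2 * Real.pi * ⟪v, ξ⟫_ℝ * Complex.I) : ℂ))
    (e_integrable hf') (e_integrable hfi)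
    (fun x _ => Real.differentiable_fourierChar_neg_bilinear_left (innerSL ℝ) ξ x) (fun x _ => hf x)
  calc 𝓕 (fun x => fderiv ℝ f x v) ξ = ∫ x, e x • fderiv ℝ f x v := Real.fourier_eq _ ξ
    _ = (2 * Real.pi * ⟪v, ξ⟫_ℝ * Complex.I) • ∫ x, e x • f x := by
      simp only [parts, fderiv_e, mul_smul, neg_smul, integral_neg, neg_neg, integral_smul]
    _ = (2 * Real.pi * ⟪v, ξ⟫_ℝ * Complex.I) • 𝓕 f ξ := by rw [Real.fourier_eq]; rfl

end Fourier

section Plancherel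

variable {V F : Type*} [NormedAddCommGroup V] [InnerProductSpace ℝ V] [FiniteDimensional ℝ V]
  [MeasurableSpace V] [BorelSpace V] [NormedAddCommGroup F]
variable [InnerProductSpace ℂ F] [CompleteSpace F]

theorem fourier_toLp_ae_eq {f : V → F} (hf : Integrable f) (hf₂ : MemLp f 2) :
    (𝓕 (hf₂.toLp f) : Lp F 2 (volume : Measure V)) =ᵐ[volume] 𝓕 f := by
  refine ae_eq_of_integral_contDiff_smul_eq ((Lp.memLp _).locallyIntegrable one_le_two)
    (continuous_fourier hf).locallyIntegrable fun g hg hgc => ?_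
  let φ : 𝓢(V, ℂ) := (hgc.comp_left Complex.ofRealCLM.map_zero).toSchwartzMap
    (Complex.ofRealCLM.contDiff.comp hg)
  have hφ (x : V) : φ x = g x := rfl
  calc ∫ x, g x • (𝓕 (hf₂.toLp f) : Lp F 2 (volume : Measure V)) x
      = (Lp.toTemperedDistribution (𝓕 (hf₂.toLp f))) φ := by
        simp [hφ]
    _ = ∫ x, 𝓕 (φ : V → ℂ) x • f x := by
        rw [← Lp.fourier_toTemperedDistribution_eq, TemperedDistribution.fourier_apply,
          Lp.toTemperedDistribution_apply]
        refine integral_congr_ae ?_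
        filter_upwards [hf₂.coeFn_toLp] with x hx
        rw [hx, SchwartzMap.fourier_coe]
    _ = ∫ x, φ x • 𝓕 f x := by
        simpa only [flip_innerₗ] using! VectorFourier.integral_fourierIntegral_smul_eq_flip
          (L := innerₗ V) (f := (φ : V → ℂ)) Real.continuous_fourierChar
          (innerSL ℝ).continuous₂ φ.integrable hf
    _ = ∫ x, g x • 𝓕 f x := by simp [hφ]

theorem eLpNorm_fourier_two {f : V → F} (hf : Integrable f) (hf₂ : MemLp f 2) :
    eLpNorm (𝓕 f) 2 = eLpNorm f 2 := by
  rw [← eLpNorm_congr_ae (fourier_toLp_ae_eq hf hf₂), ← eLpNorm_congr_ae hf₂.coeFn_toLp,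
    ← Lp.enorm_def, ← Lp.enorm_def, ← ofReal_norm, ← ofReal_norm, Lp.norm_fourier_eq]

end Plancherel

section HausdorffYoung

variable {V : Type*} [NormedAddCommGroup V] [InnerProductSpace ℝ V] [FiniteDimensional ℝ V]
  [MeasurableSpace V] [BorelSpace V]

theorem eLpNorm_fourierInv_eq {F : Type*} [NormedAddCommGroup F] [NormedSpace ℂ F] {f : V → F}
    (hf : Integrable f) (p : ℝ≥0∞) : eLpNorm (𝓕⁻ f) p = eLpNorm (𝓕 f) p := by
  have : 𝓕⁻ f = 𝓕 f ∘ Neg.neg := funext (Real.fourierInv_eq_fourier_neg f)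
  rw [this, eLpNorm_comp_measurePreserving (continuous_fourier hf).aestronglyMeasurable
    (Measure.measurePreserving_neg volume)]

theorem eLpNorm_sq_eq {α R : Type*} [MeasurableSpace α] {μ : Measure α} [NormedDivisionRing R]
    (f : α → R) (p : ℝ≥0∞) : eLpNorm (fun x => f x ^ 2) p μ = eLpNorm f (p * 2) μ ^ 2 := by
  rw [← eLpNorm_norm]
  simpa using eLpNorm_norm_rpow (p := p) (μ := μ) f two_pos

theorem eLpNorm_fourier_four_le {f : V → ℂ} (hf : Integrable f) :
    eLpNorm (𝓕 f) 4 ≤ eLpNorm f (4 / 3) := by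
  rcases eq_or_ne (eLpNorm f (4 / 3)) ⊤ with hf_top | hf_top
  · exact hf_top ▸ le_top
  let g : V → ℂ := f ⋆[ContinuousLinearMap.mul ℂ ℂ] f
  have g_integrable : Integrable g := hf.integrable_convolution _ hf
  have g_le : eLpNorm g 2 ≤ eLpNorm f (4 / 3) ^ 2 := eLpNorm_convolution_self_le hf.1
  have g_memLp : MemLp g 2 :=
    ⟨g_integrable.1, g_le.trans_lt (ENNReal.pow_lt_top hf_top.lt_top)⟩
  have fourier_g : 𝓕 g = fun ξ => 𝓕 f ξ ^ 2 := by
    ext ξ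
    rw [sq, ← Real.fourier_mul_convolution_eq hf hf]
  have eLpNorm_fourier_sq : eLpNorm (𝓕 f) 4 ^ 2 = eLpNorm (𝓕 g) 2 := by
    rw [fourier_g, eLpNorm_sq_eq]
    norm_num
  rw [← ENNReal.pow_le_pow_left_iff two_ne_zero, eLpNorm_fourier_sq,
    eLpNorm_fourier_two g_integrable g_memLp]
  exact g_le

end HausdorffYoung

section Carlson

theorem le_two_mul_rpow_mul_rpow_of_forall_le {N K A B : ℝ≥0∞} {θ : ℝ} (hθ₀ : 0 < θ)
    (hθ₁ : θ < 1) (hA : A ≠ 0) (hB : B ≠ 0)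
    (h : ∀ R : ℝ≥0, R ≠ 0 → N ≤ R ^ (θ - 1) * K * (R * A + B)) :
    N ≤ 2 * K * (A ^ (1 - θ) * B ^ θ) := by
  rcases eq_or_ne K 0 with rfl | hK
  · simpa using h 1 one_ne_zero
  rcases eq_or_ne A ⊤ with rfl | hA_top
  · have : B ^ θ ≠ 0 := (ENNReal.rpow_pos_of_nonneg (pos_of_ne_zero hB) hθ₀.le).ne'
    simp [*, ENNReal.top_rpow_of_pos, ENNReal.top_mul, ENNReal.mul_top]
  rcases eq_or_ne B ⊤ with rfl | hB_top
  · simp [*, ENNReal.top_rpow_of_pos, ENNReal.mul_top]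
  lift A to ℝ≥0 using hA_top
  lift B to ℝ≥0 using hB_top
  norm_cast at hA hB
  -- `R = B / A` balances the two terms.
  have optimum : (B / A) ^ (θ - 1) * (B / A * A + B) = 2 * (A ^ (1 - θ) * B ^ θ) := by
    rw [div_mul_cancel₀ B hA, NNReal.div_rpow, NNReal.rpow_sub_one hB, ← neg_sub 1 θ,
      NNReal.rpow_neg]
    field_simp
    ring
  have hR : B / A ≠ 0 := div_ne_zero hB hA
  calc N ≤ (B / A : ℝ≥0) ^ (θ - 1) * K * ((B / A : ℝ≥0) * A + B) := h _ hR
    _ = K * ((B / A) ^ (θ - 1) * (B / A * A + B) : ℝ≥0) := by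
      rw [mul_right_comm, mul_comm, ← ENNReal.coe_rpow_of_ne_zero hR]
      norm_cast
    _ = 2 * K * (A ^ (1 - θ) * B ^ θ) := by
      rw [optimum, ← ENNReal.coe_rpow_of_ne_zero hA, ← ENNReal.coe_rpow_of_ne_zero hB]
      push_cast
      ring

variable {E F : Type*} [NormedAddCommGroup E] [MeasurableSpace E] [BorelSpace E] {μ : Measure E}
  [NormedAddCommGroup F] [NormedSpace ℝ F]

theorem eLpNorm_le_eLpNorm_inv_add_norm_mul {p q a : ℝ≥0∞} [ENNReal.HolderTriple q a p]
    (ha : 1 ≤ a) {u : E → F} (hu : AEStronglyMeasurable u μ) {R : ℝ≥0} (hR : R ≠ 0) :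
    eLpNorm u p μ ≤ eLpNorm (fun x : E => (R + ‖x‖)⁻¹) q μ *
      (R * eLpNorm u a μ + eLpNorm (fun x => ‖x‖ • u x) a μ) := by
  have weight_ne_zero (x : E) : (R + ‖x‖ : ℝ) ≠ 0 := by positivity
  calc eLpNorm u p μ
      = eLpNorm ((fun x : E => (R + ‖x‖)⁻¹) • ((R : ℝ) • u + fun x => ‖x‖ • u x)) p μ := by
        congr 1 with x
        simp [← add_smul, smul_smul, weight_ne_zero]
    _ ≤ eLpNorm (fun x : E => (R + ‖x‖)⁻¹) q μ *
          eLpNorm ((R : ℝ) • u + fun x => ‖x‖ • u x) a μ :=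
        eLpNorm_smul_le_mul_eLpNorm (by fun_prop) (by fun_prop)
    _ ≤ _ := by
        gcongr
        refine (eLpNorm_add_le (by fun_prop) (by fun_prop) ha).trans_eq ?_
        rw [eLpNorm_const_smul, NNReal.enorm_eq]

theorem ae_eq_zero_of_eLpNorm_norm_smul_eq_zero [NullSingletonClass μ] {a : ℝ≥0∞} (ha : a ≠ 0)
    {u : E → F} (hu : AEStronglyMeasurable u μ) (h : eLpNorm (fun x => ‖x‖ • u x) a μ = 0) :
    u =ᵐ[μ] 0 := by
  filter_upwards [(eLpNorm_eq_zero_iff (by fun_prop) ha).1 h, Measure.ae_ne μ 0] with x hx hx0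
  simpa [hx0] using hx

variable [NormedSpace ℝ E] [FiniteDimensional ℝ E] [μ.IsAddHaarMeasure]

theorem eLpNorm_comp_smul {G : Type*} [NormedAddCommGroup G] {f : E → G}
    (hf : AEStronglyMeasurable f μ) {p : ℝ≥0∞} (hp : p ≠ ⊤) {r : ℝ} (hr : r ≠ 0) :
    eLpNorm (fun x => f (r • x)) p μ =
      ENNReal.ofReal |(r ^ finrank ℝ E)⁻¹| ^ (1 / p).toReal * eLpNorm f p μ := by
  have map_eq := Measure.map_addHaar_smul μ hr
  rw [← smul_eq_mul, ← eLpNorm_smul_measure_of_ne_top hp, ← map_eq,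
    eLpNorm_map_measure (map_eq ▸ hf.smul_measure _) (by fun_prop)]
  rfl

theorem memLp_inv_one_add_norm {q : ℝ≥0∞} (hq : finrank ℝ E < q) (hq' : q ≠ ⊤) :
    MemLp (fun x : E => (1 + ‖x‖)⁻¹) q μ := by
  have hq_toReal : (finrank ℝ E : ℝ) < q.toReal := by
    simpa using (ENNReal.toReal_lt_toReal (by simp) hq').2 hq
  rw [← integrable_norm_rpow_iff (by fun_prop) (pos_of_gt hq).ne' hq']
  refine (integrable_one_add_norm hq_toReal).congr (.of_forall fun x => ?_)
  have : 0 ≤ 1 + ‖x‖ := by positivity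
  simp only [norm_inv, Real.norm_of_nonneg this, Real.inv_rpow this, Real.rpow_neg this]

theorem eLpNorm_inv_add_norm {q : ℝ≥0∞} (hq : q ≠ ⊤) {R : ℝ≥0} (hR : R ≠ 0) :
    eLpNorm (fun x : E => (R + ‖x‖)⁻¹) q μ =
      (R : ℝ≥0∞) ^ (finrank ℝ E / q.toReal - 1) * eLpNorm (fun x : E => (1 + ‖x‖)⁻¹) q μ := by
  have R_ne_zero : (R : ℝ) ≠ 0 := mod_cast hR
  have rescale : (fun x : E => ((R : ℝ) + ‖x‖)⁻¹) =
      (R : ℝ)⁻¹ • fun x => (1 + ‖(R : ℝ)⁻¹ • x‖)⁻¹ := by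
    ext x
    simp only [Pi.smul_apply, smul_eq_mul, norm_smul, norm_inv, NNReal.norm_eq, ← mul_inv]
    field_simp
  have jacobian :
      ENNReal.ofReal |((R : ℝ)⁻¹ ^ finrank ℝ E)⁻¹| = (R : ℝ≥0∞) ^ (finrank ℝ E : ℝ) := by
    rw [inv_pow, inv_inv, abs_of_nonneg (by positivity), ENNReal.ofReal_pow R.coe_nonneg,
      ENNReal.ofReal_coe_nnreal, ENNReal.rpow_natCast]
  have enorm_R_inv : ‖(R : ℝ)⁻¹‖ₑ = (R : ℝ≥0∞)⁻¹ := by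
    rw [enorm_inv R_ne_zero, NNReal.enorm_eq]
  rw [rescale, eLpNorm_const_smul, eLpNorm_comp_smul (f := fun x : E => (1 + ‖x‖)⁻¹)
    (by fun_prop) hq (inv_ne_zero R_ne_zero), jacobian, ← mul_assoc, ← ENNReal.rpow_mul,
    sub_eq_neg_add, ENNReal.rpow_add _ _ (mod_cast hR) ENNReal.coe_ne_top, ENNReal.rpow_neg_one,
    enorm_R_inv, ENNReal.toReal_div, ENNReal.toReal_one, mul_one_div]

theorem exists_eLpNorm_le_mul_eLpNorm_norm_smul_rpow [Nontrivial E] {p q a : ℝ≥0∞}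
    [ENNReal.HolderTriple q a p] (ha : 1 ≤ a) (hq : finrank ℝ E < q) (hq' : q ≠ ⊤) :
    ∃ C : ℝ≥0, 0 < C ∧ ∀ u : E → F, AEStronglyMeasurable u μ →
      eLpNorm u p μ ≤ C * (eLpNorm u a μ ^ (1 - finrank ℝ E / q.toReal) *
        eLpNorm (fun x => ‖x‖ • u x) a μ ^ (finrank ℝ E / q.toReal)) := by
  have hq_toReal : (finrank ℝ E : ℝ) < q.toReal := by
    simpa using (ENNReal.toReal_lt_toReal (by simp) hq').2 hq
  have finrank_pos : (0 : ℝ) < finrank ℝ E := mod_cast Module.finrank_pos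
  have a_ne_zero : a ≠ 0 := (one_pos.trans_le ha).ne'
  lift eLpNorm (fun x : E => (1 + ‖x‖)⁻¹) q μ to ℝ≥0
    using (memLp_inv_one_add_norm hq hq').eLpNorm_ne_top with K hK
  refine ⟨2 * K + 1, by positivity, fun u hu => ?_⟩
  by_cases u_zero : u =ᵐ[μ] 0
  · simp [eLpNorm_congr_ae u_zero]
  have balanced := le_two_mul_rpow_mul_rpow_of_forall_le
    (div_pos finrank_pos (finrank_pos.trans hq_toReal))
    ((div_lt_one (finrank_pos.trans hq_toReal)).2 hq_toReal)
    (mt (eLpNorm_eq_zero_iff hu a_ne_zero).1 u_zero)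
    (mt (ae_eq_zero_of_eLpNorm_norm_smul_eq_zero a_ne_zero hu) u_zero)
    fun R hR => eLpNorm_inv_add_norm (μ := μ) hq' hR ▸
      eLpNorm_le_eLpNorm_inv_add_norm_mul (p := p) ha hu hR
  refine balanced.trans ?_
  rw [← hK]
  gcongr
  push_cast
  exact le_self_add

end Carlson

section Sobolev

theorem eLpNorm_two_sq {α F : Type*} [MeasurableSpace α] {μ : Measure α} [NormedAddCommGroup F]
    (f : α → F) : eLpNorm f 2 μ ^ 2 = ∫⁻ x, ‖f x‖ₑ ^ 2 ∂μ := by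
  simpa using eLpNorm_nnreal_pow_eq_lintegral (f := f) (μ := μ) (p := 2) two_ne_zero

theorem sum_enorm_inner_mul_sq {V ι : Type*} [NormedAddCommGroup V] [InnerProductSpace ℝ V]
    [Fintype ι] (b : OrthonormalBasis ι ℝ V) (ξ : V) (z : ℂ) :
    ∑ i, ‖2 * Real.pi * ⟪b i, ξ⟫_ℝ * Complex.I * z‖ₑ ^ 2 = ‖(2 * Real.pi) • ‖ξ‖ • z‖ₑ ^ 2 := by
  simp_rw [← ofReal_norm, ← ENNReal.ofReal_pow (norm_nonneg _)]
  rw [← ENNReal.ofReal_sum_of_nonneg fun _ _ => by positivity]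
  congr 1
  simp only [norm_mul, norm_smul, mul_pow, Complex.norm_I, Complex.norm_real, norm_norm,
    ← b.sum_sq_norm_inner_right ξ, Finset.mul_sum, Finset.sum_mul]
  simp [mul_assoc]

variable {V : Type*} [NormedAddCommGroup V] [InnerProductSpace ℝ V] [FiniteDimensional ℝ V]
  [MeasurableSpace V] [BorelSpace V]

/-- The Fourier transform `(1 + ‖ξ‖²)^{s/2} 𝓕 f ξ` of the Bessel potential `Λˢ f`, through which
both the potential and the Sobolev norms are defined. -/
noncomputable def besselFourier (s : ℝ) (f : V → ℂ) : V → ℂ :=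
  fun ξ => (((1 + ‖ξ‖ ^ 2) ^ (s / 2) : ℝ) : ℂ) * 𝓕 f ξ

/-- The Bessel potential `Λˢ f = (I − Δ)^{s/2} f`, with the inverse Fourier transform given by the
Fourier integral. -/
noncomputable def besselPotential (s : ℝ) (f : V → ℂ) : V → ℂ :=
  𝓕⁻ (besselFourier s f)

/-- The norm of `f` in `Hˢ`, computed on the Fourier side and equal to `⊤` outside `Hˢ`. -/
noncomputable def sobolevENorm (s : ℝ) (f : V → ℂ) : ℝ≥0∞ :=
  eLpNorm (besselFourier s f) 2

theorem continuous_besselFourier (s : ℝ) {f : V → ℂ} (hf : Integrable f) :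
    Continuous (besselFourier s f) := by
  have symbol : Continuous fun ξ : V => (1 + ‖ξ‖ ^ 2) ^ (s / 2) :=
    (by fun_prop : Continuous fun ξ : V => 1 + ‖ξ‖ ^ 2).rpow_const fun ξ => .inl (by positivity)
  exact (Complex.continuous_ofReal.comp symbol).mul (continuous_fourier hf)

theorem besselFourier_fderiv_apply (s : ℝ) {f : V → ℂ} (hf : Differentiable ℝ f)
    (hfi : Integrable f) {v : V} (hf' : Integrable fun x => fderiv ℝ f x v) (ξ : V) :
    besselFourier s (fun x => fderiv ℝ f x v) ξ =
      2 * Real.pi * ⟪v, ξ⟫_ℝ * Complex.I * besselFourier s f ξ := by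
  rw [besselFourier, fourier_fderiv_apply hf hfi hf', besselFourier, smul_eq_mul]
  ring

variable {ι : Type*} [Fintype ι]

theorem sum_sobolevENorm_fderiv_sq (b : OrthonormalBasis ι ℝ V) (s : ℝ) {f : V → ℂ}
    (hf : Differentiable ℝ f) (hfi : Integrable f)
    (hf' : ∀ i, Integrable fun x => fderiv ℝ f x (b i)) :
    ∑ i, sobolevENorm s (fun x => fderiv ℝ f x (b i)) ^ 2 =
      eLpNorm (fun ξ => (2 * Real.pi) • ‖ξ‖ • besselFourier s f ξ) 2 ^ 2 := by
  simp_rw [sobolevENorm, eLpNorm_two_sq]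
  rw [← lintegral_finsetSum' _ fun i _ =>
    ((continuous_besselFourier s (hf' i)).aestronglyMeasurable.enorm.pow_const 2)]
  simp_rw [besselFourier_fderiv_apply s hf hfi (hf' _), sum_enorm_inner_mul_sq]

theorem eLpNorm_norm_smul_besselFourier_le (b : OrthonormalBasis ι ℝ V) (s : ℝ) {f : V → ℂ}
    (hf : Differentiable ℝ f) (hfi : Integrable f)
    (hf' : ∀ i, Integrable fun x => fderiv ℝ f x (b i)) :
    eLpNorm (fun ξ => ‖ξ‖ • besselFourier s f ξ) 2 ≤
      (∑ i, sobolevENorm s (fun x => fderiv ℝ f x (b i)) ^ 2) ^ (1 / 2 : ℝ) := by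
  rw [sum_sobolevENorm_fderiv_sq b s hf hfi hf', one_div, ← ENNReal.rpow_natCast, Nat.cast_ofNat,
    ENNReal.rpow_rpow_inv two_ne_zero]
  refine eLpNorm_mono fun ξ => ?_
  rw [norm_smul (2 * Real.pi), Real.norm_of_nonneg (by positivity)]
  exact le_mul_of_one_le_left (norm_nonneg _) (by linarith [Real.pi_gt_three])

theorem stmt10_general [Nontrivial V] (hV : finrank ℝ V < 4) (b : OrthonormalBasis ι ℝ V) (s : ℝ) :
    ∃ C : ℝ≥0, 0 < C ∧ ∀ f : V → ℂ, Differentiable ℝ f → Integrable f →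
      (∀ i, Integrable fun x => fderiv ℝ f x (b i)) →
      eLpNorm (besselPotential s f) 4 ≤
        C * (sobolevENorm s f ^ (1 - finrank ℝ V / 4 : ℝ) *
          ((∑ i, sobolevENorm s (fun x => fderiv ℝ f x (b i)) ^ 2) ^ (1 / 2 : ℝ)) ^
            (finrank ℝ V / 4 : ℝ)) := by
  have : ENNReal.HolderTriple 4 2 (4 / 3) := ⟨by
    rw [← ENNReal.toReal_eq_toReal_iff' (by simp) (by simp)]
    norm_num [ENNReal.toReal_add]⟩
  obtain ⟨C, C_pos, carlson⟩ := exists_eLpNorm_le_mul_eLpNorm_norm_smul_rpow (F := ℂ)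
    (μ := (volume : Measure V)) (p := 4 / 3) (q := 4) (a := 2) one_le_two (mod_cast hV)
    (by simp)
  refine ⟨C, C_pos, fun f hf hfi hf' => ?_⟩
  -- If `besselFourier s f` is not integrable, its Fourier integral is `0` by convention.
  by_cases integrable : Integrable (besselFourier s f)
  · rw [besselPotential, eLpNorm_fourierInv_eq integrable]
    refine (eLpNorm_fourier_four_le integrable).trans ((carlson _ integrable.1).trans ?_)
    rw [ENNReal.toReal_ofNat, ← sobolevENorm]
    gcongr
    exact eLpNorm_norm_smul_besselFourier_le b s hf hfi hf'
  · simp [besselPotential, fourierInv_eq_zero_of_not_integrable integrable]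

end Sobolev

section HsNorm

theorem ofReal_sqrt_sum_sq {ι : Type*} [Fintype ι] {a : ι → ℝ} (ha : ∀ i, 0 ≤ a i) :
    ENNReal.ofReal √(∑ i, a i ^ 2) = (∑ i, ENNReal.ofReal (a i) ^ 2) ^ (1 / 2 : ℝ) := by
  rw [Real.sqrt_eq_rpow, ← ENNReal.ofReal_rpow_of_nonneg (by positivity) (by norm_num),
    ENNReal.ofReal_sum_of_nonneg fun _ _ => by positivity]
  simp only [ENNReal.ofReal_pow (ha _)]

variable {s : ℝ} {f : E3 → ℂ}

theorem HsNorm_nonneg : 0 ≤ HsNorm s f := by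
  unfold HsNorm
  positivity

theorem MemHs.ofReal_HsNorm (hf : MemHs s f) : ENNReal.ofReal (HsNorm s f) = sobolevENorm s f := by
  have enorm_sq (ξ : E3) : ENNReal.ofReal ((1 + ‖ξ‖ ^ 2) ^ s * ‖𝓕 f ξ‖ ^ 2) =
      ‖besselFourier s f ξ‖ₑ ^ 2 := by
    rw [← ofReal_norm, ← ENNReal.ofReal_pow (norm_nonneg _), besselFourier, norm_mul, mul_pow,
      Complex.norm_real, Real.norm_of_nonneg (by positivity),
      ← Real.rpow_mul_natCast (by positivity)]
    norm_num
  rw [HsNorm, ← ENNReal.ofReal_rpow_of_nonneg (by positivity) (by norm_num),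
    ofReal_integral_eq_lintegral_ofReal hf.2 (.of_forall fun ξ => by positivity),
    lintegral_congr enorm_sq, ← eLpNorm_two_sq, ← sobolevENorm, one_div,
    ← ENNReal.rpow_natCast, Nat.cast_ofNat, ENNReal.rpow_rpow_inv two_ne_zero]

theorem pdC_eq_fderiv_basisFun (k : Fin 3) (f : E3 → ℂ) :
    pdC k f = fun x => fderiv ℝ f x (EuclideanSpace.basisFun (Fin 3) ℝ k) := by
  simp only [EuclideanSpace.basisFun_apply]
  rfl

theorem ofReal_mul_HsNorm_rpow_mul_sqrt_rpow (hf : MemHs s f) (hf' : ∀ k, MemHs s (pdC k f))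
    (C : ℝ≥0) {α β : ℝ} (hα : 0 ≤ α) (hβ : 0 ≤ β) :
    ENNReal.ofReal (C * HsNorm s f ^ α * √(∑ k, HsNorm s (pdC k f) ^ 2) ^ β) =
      C * (sobolevENorm s f ^ α *
        ((∑ k, sobolevENorm s (pdC k f) ^ 2) ^ (1 / 2 : ℝ)) ^ β) := by
  simp_rw [← hf.ofReal_HsNorm, ← (hf' _).ofReal_HsNorm,
    ← ofReal_sqrt_sum_sq fun _ => HsNorm_nonneg]
  rw [mul_assoc, ENNReal.ofReal_mul C.coe_nonneg,
    ENNReal.ofReal_mul (Real.rpow_nonneg HsNorm_nonneg _), ENNReal.ofReal_coe_nnreal,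
    ENNReal.ofReal_rpow_of_nonneg HsNorm_nonneg hα,
    ENNReal.ofReal_rpow_of_nonneg (Real.sqrt_nonneg _) hβ]

end HsNorm

/-- Gagliardo–Nirenberg type interpolation: ‖f‖_{W^{s,4}} ≤ C‖f‖_{Hˢ}^{1/4}‖∇f‖_{Hˢ}^{3/4}. -/
theorem stmt10 (s : ℝ) :
    ∃ C : ℝ, 0 < C ∧ ∀ f : E3 → ℂ, Differentiable ℝ f → MemHs s f →
      (∀ k, MemHs s (pdC k f)) →
      eLpNorm (Lam s f) 4 volume ≤
        ENNReal.ofReal (C * HsNorm s f ^ (1 / 4 : ℝ) *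
          Real.sqrt (∑ k, HsNorm s (pdC k f) ^ 2) ^ (3 / 4 : ℝ)) := by
  obtain ⟨C, C_pos, bound⟩ := stmt10_general (V := E3) (by simp)
    (EuclideanSpace.basisFun (Fin 3) ℝ) s
  simp only [← pdC_eq_fderiv_basisFun, finrank_euclideanSpace_fin] at bound
  refine ⟨C, C_pos, fun f hf hfs hfs' => (bound f hf hfs.1 fun k => (hfs' k).1).trans_eq ?_⟩
  rw [ofReal_mul_HsNorm_rpow_mul_sqrt_rpow hfs hfs' C (by norm_num) (by norm_num)]
  norm_num
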